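/- Let q be a power of a prime p, let k, f be positive integers with f | k, and let a ∈ F_q^*. Then the set D = {x ∈ F_{q^k} : Tr_{q^f/q}(x^{(q^k-1)/(q^f-1)}) + a = 0} has cardinality |D| = q^{f-1}(q^k - 1)/(q^f - 1). -/

import Mathlib

/-! Since `a ≠ 0`, no solution `x` is zero, and the norm and trace of an extension of finite fields
are surjective homomorphisms of unit groups and of additive groups respectively, so all their
fibers have the size of the kernel.  The trace `Ff → Fq` takes the value `-a` exactly `q ^ (f - 1)`
times, always at units of `Ff`, each of which is the norm of `(q ^ k - 1) / (q ^ f - 1)` units of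
`Fk`. -/

section Group

variable {G H : Type*} [Group G] [Group H] {φ : G →* H}

theorem monoidHom_card_preimage_eq_mul_card_ker (hφ : Function.Surjective φ) (s : Set H) :
    Nat.card (φ ⁻¹' s) = Nat.card s * Nat.card φ.ker := by
  rw [← Nat.card_prod]
  exact Nat.card_congr <| calc
    (φ ⁻¹' s : Set G) ≃ Σ h : s, φ ⁻¹' {(h : H)} :=
      (Equiv.sigmaSubtypeFiberEquivSubtype φ fun _ => Iff.rfl).symm
    _ ≃ Σ _ : s, φ.ker := Equiv.sigmaCongrRight fun h => φ.fiberEquivKerOfSurjective hφ h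
    _ ≃ s × φ.ker := Equiv.sigmaEquivProd _ _

theorem monoidHom_card_preimage_mul_card (hφ : Function.Surjective φ) (s : Set H) :
    Nat.card (φ ⁻¹' s) * Nat.card H = Nat.card s * Nat.card G := by
  have card_domain : Nat.card G = Nat.card H * Nat.card φ.ker := by
    simpa only [Set.preimage_univ, Nat.card_univ] using
      monoidHom_card_preimage_eq_mul_card_ker hφ Set.univ
  rw [monoidHom_card_preimage_eq_mul_card_ker hφ, card_domain]
  ring

end Group

theorem addMonoidHom_card_preimage_mul_card {A B : Type*} [AddGroup A] [AddGroup B] {φ : A →+ B}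
    (hφ : Function.Surjective φ) (s : Set B) :
    Nat.card (φ ⁻¹' s) * Nat.card B = Nat.card s * Nat.card A :=
  monoidHom_card_preimage_mul_card (φ := φ.toMultiplicative) hφ s

theorem card_preimage_units_val {G₀ : Type*} [GroupWithZero G₀] {s : Set G₀} (hs : 0 ∉ s) :
    Nat.card ((↑) ⁻¹' s : Set G₀ˣ) = Nat.card s :=
  Nat.card_preimage_of_injective Units.val_injective fun x hx =>
    ⟨Units.mk0 x (ne_of_mem_of_not_mem hx hs), rfl⟩

theorem card_norm_preimage_mul {K L : Type*} [Field K] [Field L] [Finite L] [Algebra K L]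
    {s : Set K} (hs : 0 ∉ s) :
    Nat.card (Algebra.norm K ⁻¹' s : Set L) * (Nat.card K - 1) =
      Nat.card s * (Nat.card L - 1) := by
  have : Finite K := .of_injective (algebraMap K L) (algebraMap K L).injective
  have zero_notMem : (0 : L) ∉ Algebra.norm K ⁻¹' s := by
    rwa [Set.mem_preimage, Algebra.norm_zero]
  rw [← card_preimage_units_val zero_notMem, ← card_preimage_units_val hs,
    ← Nat.card_units K, ← Nat.card_units L]
  exact monoidHom_card_preimage_mul_card (FiniteField.unitsMap_norm_surjective K L)
    (Units.val ⁻¹' s)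

theorem card_trace_fiber {K L : Type*} [Field K] [Finite K] [Field L] [Algebra K L]
    [FiniteDimensional K L] (b : K) :
    Nat.card (Algebra.trace K L ⁻¹' {b}) = Nat.card K ^ (Module.finrank K L - 1) := by
  have fiber_mul : Nat.card (Algebra.trace K L ⁻¹' {b}) * Nat.card K = Nat.card L := by
    simpa only [Nat.card_unique, one_mul, LinearMap.toAddMonoidHom_coe] using
      addMonoidHom_card_preimage_mul_card (φ := (Algebra.trace K L).toAddMonoidHom)
        (Algebra.trace_surjective K L) {b}
  refine Nat.eq_of_mul_eq_mul_right (Nat.card_pos (α := K)) ?_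
  rw [fiber_mul, pow_sub_one_mul Module.finrank_pos.ne', Module.natCard_eq_pow_finrank (K := K)]

theorem card_trace_norm_fiber_mul {K L M : Type*} [Field K] [Field L] [Field M] [Finite M]
    [Algebra K L] [Algebra L M] {b : K} (hb : b ≠ 0) :
    Nat.card {x : M // Algebra.trace K L (Algebra.norm L x) = b} * (Nat.card L - 1) =
      Nat.card K ^ (Module.finrank K L - 1) * (Nat.card M - 1) := by
  have : Finite L := .of_injective (algebraMap L M) (algebraMap L M).injective
  have : Finite K := .of_injective (algebraMap K L) (algebraMap K L).injective
  have zero_notMem : (0 : L) ∉ Algebra.trace K L ⁻¹' {b} := by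
    simpa only [Set.mem_preimage, map_zero, Set.mem_singleton_iff] using hb.symm
  rw [← card_trace_fiber b]
  exact card_norm_preimage_mul zero_notMem

/-- Let `q` be a power of a prime `p`, `k, f` positive integers with
`f ∣ k`, and `a ∈ F_qˣ`.  Then the set
`D = {x ∈ F_{q^k} : Tr_{q^f/q}(x^{(q^k-1)/(q^f-1)}) + a = 0}` has cardinality
`q^{f-1}(q^k - 1)/(q^f - 1)`.
Here `x^{(q^k-1)/(q^f-1)}` is the norm of `x` from `Fk` to `Ff` (hypothesis `hnorm`). -/
theorem stmt1 (p e q f k : ℕ) [Fact p.Prime] (he : 0 < e) (hq : q = p ^ e)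
    (hf : 0 < f) (hk : 0 < k) (hfk : f ∣ k)
    (Fq Ff Fk : Type) [Field Fq] [Field Ff] [Field Fk]
    [Fintype Fq] [Fintype Ff] [Fintype Fk]
    [Algebra Fq Ff] [Algebra Ff Fk]
    (hcq : Fintype.card Fq = q) (hcf : Fintype.card Ff = q ^ f)
    (hck : Fintype.card Fk = q ^ k)
    (hnorm : ∀ x : Fk,
      algebraMap Ff Fk (Algebra.norm Ff x) = x ^ ((q ^ k - 1) / (q ^ f - 1)))
    (a : Fq) (ha : a ≠ 0) :
    (Nat.card {x : Fk // Algebra.trace Fq Ff (Algebra.norm Ff x) + a = 0} : ℚ)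
      = (q : ℚ) ^ (f - 1) * ((q : ℚ) ^ k - 1) / ((q : ℚ) ^ f - 1) := by
  have one_lt_q : 1 < q := hcq ▸ Fintype.one_lt_card
  have finrank_eq : Module.finrank Fq Ff = f := by
    refine Nat.pow_right_injective one_lt_q ?_
    simpa only [hcq, hcf] using (Module.card_eq_pow_finrank (K := Fq) (V := Ff)).symm
  have count := card_trace_norm_fiber_mul (L := Ff) (M := Fk) (neg_ne_zero.mpr ha)
  simp only [Nat.card_eq_fintype_card (α := Fq), Nat.card_eq_fintype_card (α := Ff),
    Nat.card_eq_fintype_card (α := Fk), hcq, hcf, hck, finrank_eq] at count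
  have one_lt_pow_f : 1 < (q : ℚ) ^ f := one_lt_pow₀ (mod_cast one_lt_q) hf.ne'
  rw [eq_div_iff (sub_pos.mpr one_lt_pow_f).ne']
  simp only [add_eq_zero_iff_eq_neg]
  have one_le_pow (n : ℕ) : 1 ≤ q ^ n := Nat.one_le_pow n q (by omega)
  simpa only [Nat.cast_mul, Nat.cast_pow, Nat.cast_sub (one_le_pow _), Nat.cast_one] using
    congrArg (Nat.cast (R := ℚ)) count
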